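/- If X and Y are shift spaces over 𝒜, each having the d̄-shadowing property, and d̄_M^H(M_σ(X), M_σ(Y)) < ε² for some ε > 0, then d̄^H(X, Y) < 7ε. -/

import Mathlib

open MeasureTheory Filter Topology

namespace DbarPaper

variable {A : Type} [Fintype A] [DecidableEq A] [Inhabited A]
  [TopologicalSpace A] [DiscreteTopology A]
  [MeasurableSpace A] [MeasurableSingletonClass A]

/-- The shift map on the full shift `𝒜^∞ = ℕ → A`. -/
def shift : (ℕ → A) → (ℕ → A) := fun x n => x (n + 1)

/-- A shift space: a nonempty, closed, shift-invariant subset of the full shift. -/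
def ShiftSpace (X : Set (ℕ → A)) : Prop :=
  X.Nonempty ∧ IsClosed X ∧ ∀ x ∈ X, shift x ∈ X

/-- The word `w` appears in the sequence `x`. -/
def occursIn (w : List A) (x : ℕ → A) : Prop :=
  ∃ i : ℕ, w = List.ofFn (fun k : Fin w.length => x (i + (k : ℕ)))

/-- The language of a set `X`: all finite words appearing in points of `X`. -/
def lang (X : Set (ℕ → A)) : Set (List A) := {w | ∃ x ∈ X, occursIn w x}

/-- Words of length `n` in the language of `X`. -/
def langN (n : ℕ) (X : Set (ℕ → A)) : Set (List A) := {w | w ∈ lang X ∧ w.length = n}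

/-- The pseudometric `d̄` on the full shift. -/
noncomputable def dbar (x y : ℕ → A) : ℝ :=
  Filter.limsup
    (fun n => (((Finset.range n).filter (fun j => x j ≠ y j)).card : ℝ) / (n : ℝ))
    Filter.atTop

/-- Hausdorff "distance" between two sets induced by a `ℝ`-valued distance. -/
noncomputable def hausdist {Z : Type*} (d : Z → Z → ℝ) (P Q : Set Z) : ℝ :=
  max (⨆ p : P, ⨅ q : Q, d p q) (⨆ q : Q, ⨅ p : P, d p q)

/-- A probability measure is shift-invariant. -/
def invariantPM (μ : ProbabilityMeasure (ℕ → A)) : Prop :=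
  (μ : Measure (ℕ → A)).map shift = (μ : Measure (ℕ → A))

/-- `M_σ(X)`: shift-invariant Borel probability measures giving `X` full measure. -/
def Msigma (X : Set (ℕ → A)) : Set (ProbabilityMeasure (ℕ → A)) :=
  {μ | invariantPM μ ∧ μ X = 1}

/-- `ξ` is a joining of `μ` and `ν`: a `σ×σ`-invariant measure on the product with
marginals `μ` and `ν`. -/
def IsJoining (ξ : Measure ((ℕ → A) × (ℕ → A))) (μ ν : ProbabilityMeasure (ℕ → A)) : Prop :=
  ξ.map (Prod.map shift shift) = ξ ∧
  ξ.map Prod.fst = (μ : Measure (ℕ → A)) ∧ ξ.map Prod.snd = (ν : Measure (ℕ → A))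

/-- Ornstein's metric `d̄_M` on invariant measures. -/
noncomputable def dbarM (μ ν : ProbabilityMeasure (ℕ → A)) : ℝ :=
  sInf {r : ℝ | ∃ ξ : Measure ((ℕ → A) × (ℕ → A)),
    IsJoining ξ μ ν ∧ r = (ξ {p | p.1 0 ≠ p.2 0}).toReal}

/-- `d̄_M`-stability of a shift space (Austin). -/
def DbarMStable (X : Set (ℕ → A)) : Prop :=
  ∀ ε : ℝ, 0 < ε → ∃ U : Set (ProbabilityMeasure (ℕ → A)), IsOpen U ∧ Msigma X ⊆ U ∧
    ∀ ν ∈ U, invariantPM ν → ∃ μ ∈ Msigma X, dbarM μ ν < ε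

/-- The infinite concatenation of a sequence of (nonempty) words. -/
def concatSeq (w : ℕ → List A) : ℕ → A := fun n =>
  ((List.ofFn (fun i : Fin (n + 1) => w (i : ℕ))).flatten).getD n default

/-- The `d̄`-shadowing property. -/
def DbarShadowing (X : Set (ℕ → A)) : Prop :=
  ∀ ε : ℝ, 0 < ε → ∃ N : ℕ, 0 < N ∧ ∀ w : ℕ → List A,
    (∀ j, w j ∈ lang X) → (∀ j, N ≤ (w j).length) →
    ∃ x' ∈ X, dbar (concatSeq w) x' < ε

/-- `U_n(X)`: the union of cylinders of words of length `n` in the language of `X`. -/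
def cylNbhd (X : Set (ℕ → A)) (n : ℕ) : Set (ℕ → A) :=
  {x | List.ofFn (fun k : Fin n => x (k : ℕ)) ∈ lang X}

/-- The `n`-th (topological) Markov approximation of `X`: all sequences whose subwords of
length `n+1` belong to the language of `X`. -/
def markovApprox (X : Set (ℕ → A)) (n : ℕ) : Set (ℕ → A) :=
  {x | ∀ i : ℕ, List.ofFn (fun k : Fin (n + 1) => x (i + (k : ℕ))) ∈ lang X}

/-- Transitivity, in terms of the language. -/
def TransitiveShift (X : Set (ℕ → A)) : Prop :=
  ∀ u ∈ lang X, ∀ w ∈ lang X, ∃ v : List A, u ++ v ++ w ∈ lang X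

/-- Topological mixing, in terms of the language. -/
def MixingShift (X : Set (ℕ → A)) : Prop :=
  ∀ u ∈ lang X, ∀ w ∈ lang X, ∃ N : ℕ, ∀ m : ℕ, N ≤ m →
    ∃ v : List A, v.length = m ∧ u ++ v ++ w ∈ lang X

/-- Chain mixing: all but finitely many Markov approximations are topologically mixing. -/
def ChainMixing (X : Set (ℕ → A)) : Prop :=
  ∃ N : ℕ, ∀ n : ℕ, N ≤ n → MixingShift (markovApprox X n)

/-- `C` is the measure center of `X`: the smallest shift space contained in `X` of full
measure for every invariant measure of `X`. -/
def IsMeasureCenter (X C : Set (ℕ → A)) : Prop :=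
  ShiftSpace C ∧ C ⊆ X ∧ (∀ μ ∈ Msigma X, μ C = 1) ∧
  ∀ Y : Set (ℕ → A), ShiftSpace Y → Y ⊆ X → (∀ μ ∈ Msigma X, μ Y = 1) → C ⊆ Y

/-- Measure of the cylinder determined by a word of length `n`. -/
noncomputable def cylMeasure (μ : ProbabilityMeasure (ℕ → A)) {n : ℕ} (w : Fin n → A) : ℝ :=
  ((μ : Measure (ℕ → A)) {x | ∀ k : Fin n, x (k : ℕ) = w k}).toReal

/-- Entropy of the partition into cylinders of length `n`. -/
noncomputable def blockEntropy (μ : ProbabilityMeasure (ℕ → A)) (n : ℕ) : ℝ :=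
  -∑ w : Fin n → A, cylMeasure μ w * Real.log (cylMeasure μ w)

/-- Kolmogorov–Sinai entropy of a shift-invariant measure. -/
noncomputable def ksEntropy (μ : ProbabilityMeasure (ℕ → A)) : ℝ :=
  Filter.limsup (fun n => blockEntropy μ n / (n : ℝ)) Filter.atTop

/-- `μ` is ergodic for the shift. -/
def ErgodicPM (μ : ProbabilityMeasure (ℕ → A)) : Prop :=
  Ergodic shift (μ : Measure (ℕ → A))

/-- Ergodic measures are entropy dense in `M_σ(X)`. -/
def EntropyDense (X : Set (ℕ → A)) : Prop :=
  ∀ μ ∈ Msigma X, ∀ U : Set (ProbabilityMeasure (ℕ → A)), IsOpen U → μ ∈ U →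
    ∀ ε : ℝ, 0 < ε →
      ∃ ν ∈ Msigma X, ν ∈ U ∧ ErgodicPM ν ∧ |ksEntropy ν - ksEntropy μ| < ε

/-- Topological entropy of a shift space. -/
noncomputable def topEntropy (X : Set (ℕ → A)) : ℝ :=
  Filter.limsup (fun n => Real.log (Nat.card ↥(langN n X)) / (n : ℝ)) Filter.atTop

/-- The standard metric on the full shift. -/
noncomputable def rho (x y : ℕ → A) : ℝ :=
  open scoped Classical in
  if x = y then 0 else (2 : ℝ) ^ (-((sInf {j : ℕ | x j ≠ y j} : ℕ) : ℤ))

/-- Proximality of a shift space. -/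
def ProximalShift (X : Set (ℕ → A)) : Prop :=
  ∀ x ∈ X, ∀ y ∈ X,
    Filter.liminf (fun n => rho (shift^[n] x) (shift^[n] y)) Filter.atTop = 0

/-- Minimality of a shift space. -/
def MinimalShift (X : Set (ℕ → A)) : Prop :=
  ShiftSpace X ∧ ∀ Y : Set (ℕ → A), ShiftSpace Y → Y ⊆ X → Y = X

/-- An `A`-labeled directed multigraph on vertices `V` with edges `E`. -/
structure LabeledGraph (A V E : Type*) where
  src : E → V
  dst : E → V
  lab : E → A

namespace LabeledGraph

variable {A' V E : Type*}

/-- `es` is a path in `G` from `u` to `v`. -/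
def PathFromTo (G : LabeledGraph A' V E) (es : List E) (u v : V) : Prop :=
  es.Chain' (fun e f => G.dst e = G.src f) ∧
  es.head?.map G.src = some u ∧ es.getLast?.map G.dst = some v

/-- `G` is strongly connected. -/
def StronglyConnected (G : LabeledGraph A' V E) : Prop :=
  ∀ u v : V, ∃ es : List E, G.PathFromTo es u v

/-- `d` is the period of `G`: the gcd of lengths of closed paths. -/
def HasPeriod (G : LabeledGraph A' V E) (d : ℕ) : Prop :=
  (∀ (es : List E) (u : V), G.PathFromTo es u u → d ∣ es.length) ∧
  ∀ d' : ℕ, (∀ (es : List E) (u : V), G.PathFromTo es u u → d' ∣ es.length) → d' ∣ d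

/-- `b` is a safe symbol for `G`. -/
def SafeSymbol (G : LabeledGraph A' V E) (b : A') : Prop :=
  ∀ e : E, ∃ e' : E, G.src e' = G.src e ∧ G.dst e' = G.dst e ∧ G.lab e' = b

/-- The shift space presented by the labeled graph `G`: labels read along infinite paths. -/
def presents (G : LabeledGraph A' V E) : Set (ℕ → A') :=
  {x | ∃ e : ℕ → E, (∀ j, G.dst (e j) = G.src (e (j + 1))) ∧ ∀ j, x j = G.lab (e j)}

end LabeledGraph

/-- The coupling of a family of labeled graphs: an edge labeled `a` from `v` to `v'` exists
iff each `G k` has an edge from `v k` to `v' k` labeled `a`. -/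
def coupling {A' : Type*} {n : ℕ} {V E : Fin n → Type*}
    (G : ∀ k, LabeledGraph A' (V k) (E k)) :
    LabeledGraph A' (∀ k, V k) {p : (∀ k, E k) × A' // ∀ k, (G k).lab (p.1 k) = p.2} where
  src p := fun k => (G k).src (p.1.1 k)
  dst p := fun k => (G k).dst (p.1.1 k)
  lab p := p.1.2

/-- Sofic shift spaces: those presented by some finite labeled graph. -/
def Sofic (X : Set (ℕ → A)) : Prop :=
  ∃ (V E : Type) (_ : Fintype V) (_ : Fintype E) (G : LabeledGraph A V E),
    X = G.presents

/-- The coded shift generated by a finite set of words `B`: the closure of the set of all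
shifts of infinite concatenations of words from `B`. -/
def codedShift (B : Finset (List A)) : Set (ℕ → A) :=
  closure {x | ∃ (b : ℕ → List A) (k : ℕ), (∀ i, b i ∈ B) ∧ x = shift^[k] (concatSeq b)}

/-!
Let `√H < ε`, where `H` is the Hausdorff distance of `M_σ(X)` and `M_σ(Y)`, and let `N` be the
length provided by `d̄`-shadowing in `Y`. Every invariant measure `μ` on `X` has a joining with an
invariant measure on `Y` under which the zeroth symbols differ with probability less than `ε²`. By
invariance the expected proportion of mismatches over the first `N` symbols is also less than `ε²`,
so Markov's inequality gives `μ`-mass less than `ε` to the closed set of *bad* points, those whose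
first `N` symbols differ from those of every point of `Y` in proportion at least `ε`.

The orbit of any `x ∈ X` must then visit the bad set with upper frequency at most `ε`: otherwise an
accumulation point of the empirical measures of `x` would be an invariant measure on `X` giving it
mass at least `ε`. Cut `x` greedily into blocks of length at least `N`, each of them except the
first starting at a good time and each lasting until the first good time at distance at least `N`,
and over each block copy a point of `Y` matching its first `N` symbols up to proportion `ε`. Apart
from the first block, the mismatches of `x` with this concatenation of words of `Y` either lie in
the first `N` symbols of a block, which costs at most `ε`, or sit at bad times, which costs at most
another `ε`. Shadowing turns the concatenation into a point of `Y` at an arbitrarily small further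
cost, so `x` is within `2ε` of `Y`, up to an arbitrarily small error.
-/

section HausdorffDistance

variable {Z : Type*} {d : Z → Z → ℝ} {P Q : Set Z} {c : ℝ}

theorem hausdist_comm (hd : ∀ a b, d a b = d b a) (P Q : Set Z) :
    hausdist d P Q = hausdist d Q P := by
  conv_lhs => rw [show d = fun a b => d b a from funext₂ hd]
  exact max_comm _ _

theorem exists_lt_of_hausdist_lt {C : ℝ} (hd₀ : ∀ a b, 0 ≤ d a b) (hdC : ∀ a b, d a b ≤ C)
    (hQ : Q.Nonempty) (h : hausdist d P Q < c) : ∀ p ∈ P, ∃ q ∈ Q, d p q < c := by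
  intro p hp
  have : Nonempty Q := hQ.to_subtype
  have hbelow : ∀ p : P, BddBelow (Set.range fun q : Q => d p q) := fun p =>
    ⟨0, Set.forall_mem_range.2 fun _ => hd₀ _ _⟩
  have habove : BddAbove (Set.range fun p : P => ⨅ q : Q, d p q) :=
    ⟨C, Set.forall_mem_range.2 fun p => ciInf_le_of_le (hbelow p) (Classical.arbitrary Q) (hdC _ _)⟩
  have hp_lt : ⨅ q : Q, d p q < c :=
    (le_ciSup habove ⟨p, hp⟩).trans_lt ((le_max_left _ _).trans_lt h)
  obtain ⟨q, hq⟩ := exists_lt_of_ciInf_lt hp_lt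
  exact ⟨q, q.2, hq⟩

theorem iSup_iInf_le_of_forall_exists_le (hd₀ : ∀ a b, 0 ≤ d a b) (hP : P.Nonempty)
    (h : ∀ p ∈ P, ∃ q ∈ Q, d p q ≤ c) : ⨆ p : P, ⨅ q : Q, d p q ≤ c := by
  have : Nonempty P := hP.to_subtype
  refine ciSup_le fun p => ?_
  obtain ⟨q, hq, hle⟩ := h p p.2
  exact ciInf_le_of_le ⟨0, Set.forall_mem_range.2 fun _ => hd₀ _ _⟩ ⟨q, hq⟩ hle

theorem hausdist_le (hd₀ : ∀ a b, 0 ≤ d a b) (hP : P.Nonempty) (hQ : Q.Nonempty)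
    (hPQ : ∀ p ∈ P, ∃ q ∈ Q, d p q ≤ c) (hQP : ∀ q ∈ Q, ∃ p ∈ P, d p q ≤ c) :
    hausdist d P Q ≤ c :=
  max_le (iSup_iInf_le_of_forall_exists_le hd₀ hP hPQ)
    (iSup_iInf_le_of_forall_exists_le (d := fun q p => d p q) (fun _ _ => hd₀ _ _) hQ hQP)

end HausdorffDistance

section EmpiricalMeasure

variable {Ω : Type*} [MeasurableSpace Ω] {T : Ω → Ω} {x : Ω} {B K : Set Ω}

open Classical in
theorem inv_smul_sum_dirac_apply (T : Ω → Ω) (x : Ω) (n : ℕ) (hB : MeasurableSet B) :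
    ((n + 1 : ENNReal)⁻¹ • ∑ i ∈ Finset.range (n + 1), Measure.dirac (T^[i] x)) B =
      Nat.count (fun i => T^[i] x ∈ B) (n + 1) / (n + 1) := by
  simp [Measure.dirac_apply' _ hB, Set.indicator_apply, Nat.count_eq_card_filter_range,
    ENNReal.div_eq_inv_mul]

/-- The empirical measure of the orbit segment `x, T x, …, Tⁿ x`, giving mass `1 / (n + 1)` to each
of its points. The segment has `n + 1` points so that the measure is a probability measure for
every `n`. -/
noncomputable def empiricalMeasure (T : Ω → Ω) (x : Ω) (n : ℕ) : ProbabilityMeasure Ω :=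
  ⟨(n + 1 : ENNReal)⁻¹ • ∑ i ∈ Finset.range (n + 1), Measure.dirac (T^[i] x), ⟨by
    classical
    rw [inv_smul_sum_dirac_apply T x n MeasurableSet.univ]
    simpa using ENNReal.div_self (by simp) (by finiteness)⟩⟩

open Classical in
theorem empiricalMeasure_apply (T : Ω → Ω) (x : Ω) (n : ℕ) (hB : MeasurableSet B) :
    (empiricalMeasure T x n : Measure Ω) B =
      Nat.count (fun i => T^[i] x ∈ B) (n + 1) / (n + 1) :=
  inv_smul_sum_dirac_apply T x n hB

theorem integral_empiricalMeasure (T : Ω → Ω) (x : Ω) (n : ℕ) {f : Ω → ℝ}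
    (hf : StronglyMeasurable f) :
    ∫ z, f z ∂(empiricalMeasure T x n : Measure Ω) = birkhoffAverage ℝ T f (n + 1) x := by
  have hint : ∀ i ∈ Finset.range (n + 1), Integrable f (Measure.dirac (T^[i] x)) := fun i _ =>
    integrable_dirac' hf (by simp)
  have hcast : ((n + 1 : ENNReal)⁻¹).toReal = ((n + 1 : ℕ) : ℝ)⁻¹ := by
    rw [ENNReal.toReal_inv, ← Nat.cast_succ, ENNReal.toReal_natCast]
  simp only [empiricalMeasure, ProbabilityMeasure.coe_mk, integral_smul_measure,
    integral_finsetSum_measure hint, integral_dirac' _ _ hf, hcast, birkhoffAverage, birkhoffSum]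

variable [TopologicalSpace Ω] [BorelSpace Ω]

theorem map_eq_of_tendsto_empiricalMeasure [HasOuterApproxClosed Ω] (hT : Continuous T)
    {F : Filter ℕ} [F.NeBot] (hF : F ≤ atTop) {μ : ProbabilityMeasure Ω}
    (h : Tendsto (empiricalMeasure T x) F (𝓝 μ)) : (μ : Measure Ω).map T = μ := by
  suffices hmap : Tendsto (fun n => (empiricalMeasure T x n).map hT.aemeasurable) F (𝓝 μ) from
    congrArg ProbabilityMeasure.toMeasure (tendsto_nhds_unique
      (ProbabilityMeasure.tendsto_map_of_tendsto_of_continuous _ _ h hT) hmap)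
  rw [ProbabilityMeasure.tendsto_iff_forall_integral_tendsto] at h ⊢
  intro f
  have hbdd : Bornology.IsBounded (Set.range f) := f.isBounded_range
  have hdiff : Tendsto (fun n => birkhoffAverage ℝ T f (n + 1) (T x) -
      birkhoffAverage ℝ T f (n + 1) x) F (𝓝 0) :=
    ((tendsto_birkhoffAverage_apply_sub_birkhoffAverage' ℝ hbdd T x).comp
      (tendsto_add_atTop_nat 1)).mono_left hF
  have hadd := (h f).add hdiff
  rw [add_zero] at hadd
  refine hadd.congr fun n => ?_
  have hf := f.continuous.stronglyMeasurable
  rw [ProbabilityMeasure.toMeasure_map, integral_map hT.aemeasurable hf.aestronglyMeasurable,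
    integral_empiricalMeasure T x n hf,
    integral_empiricalMeasure (f := fun z => f (T z)) T x n (hf.comp_measurable hT.measurable),
    add_sub_cancel]
  simp only [birkhoffAverage, birkhoffSum, ← Function.iterate_succ_apply',
    ← Function.iterate_succ_apply]

variable [CompactSpace Ω] [T2Space Ω] [HasOuterApproxClosed Ω]

theorem exists_tendsto_empiricalMeasure (hT : Continuous T) (hK : IsClosed K)
    (hTK : Set.MapsTo T K K) (hx : x ∈ K) {F : Filter ℕ} [F.NeBot] (hF : F ≤ atTop) :
    ∃ μ : ProbabilityMeasure Ω, (μ : Measure Ω).map T = μ ∧ μ K = 1 ∧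
      ∃ G ≤ F, G.NeBot ∧ Tendsto (empiricalMeasure T x) G (𝓝 μ) := by
  obtain ⟨μ, hμ⟩ := exists_clusterPt_of_compactSpace (F.map (empiricalMeasure T x))
  obtain ⟨U, hUF, hU⟩ := mapClusterPt_iff_ultrafilter.1 hμ
  refine ⟨μ, map_eq_of_tendsto_empiricalMeasure hT (hUF.trans hF) hU, ?_, U, hUF, U.neBot, hU⟩
  have hone : ∀ n, (empiricalMeasure T x n : Measure Ω) K = 1 := fun n => by
    classical
    rw [empiricalMeasure_apply T x n hK.measurableSet,
      Nat.count_of_forall fun i _ => hTK.iterate i hx, Nat.cast_succ]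
    exact ENNReal.div_self (by simp) (by finiteness)
  have hlim := ProbabilityMeasure.limsup_measure_closed_le_of_tendsto hU hK
  simp only [hone, limsup_const] at hlim
  rw [← ENNReal.coe_inj, ProbabilityMeasure.ennreal_coeFn_eq_coeFn_toMeasure, ENNReal.coe_one]
  exact prob_le_one.antisymm hlim

open Classical in
theorem eventually_count_visits_lt (hT : Continuous T) (hK : IsClosed K)
    (hTK : Set.MapsTo T K K) (hx : x ∈ K) (hB : IsClosed B) {c : ℝ}
    (hc : ∀ μ : ProbabilityMeasure Ω, (μ : Measure Ω).map T = μ → μ K = 1 →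
      (μ : Measure Ω).real B < c) :
    ∀ᶠ n : ℕ in atTop, (Nat.count (fun i => T^[i] x ∈ B) n : ℝ) < c * n := by
  rw [← map_add_atTop_eq_nat 1, eventually_map]
  by_contra hfreq
  set S : Set ℕ := {n | ¬(Nat.count (fun i => T^[i] x ∈ B) (n + 1) : ℝ) < c * (n + 1 : ℕ)}
  have : (atTop ⊓ 𝓟 S).NeBot := frequently_mem_iff_neBot.1 (not_eventually.1 hfreq)
  obtain ⟨μ, hinv, hμK, G, hG, _, hlim⟩ :=
    exists_tendsto_empiricalMeasure hT hK hTK hx (F := atTop ⊓ 𝓟 S) inf_le_left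
  have hle : ∀ᶠ n in G, ENNReal.ofReal c ≤ (empiricalMeasure T x n : Measure Ω) B := by
    filter_upwards [hG (mem_inf_of_right (mem_principal_self S))] with n hn
    rw [empiricalMeasure_apply T x n hB.measurableSet, ← Nat.cast_succ,
      ENNReal.le_div_iff_mul_le (by simp) (by simp), ← ENNReal.ofReal_natCast,
      ← ENNReal.ofReal_natCast, ← ENNReal.ofReal_mul' (by positivity)]
    exact ENNReal.ofReal_le_ofReal (not_lt.1 hn)
  have hcμ : ENNReal.ofReal c ≤ (μ : Measure Ω) B :=
    (le_limsup_of_frequently_le hle.frequently).trans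
      (ProbabilityMeasure.limsup_measure_closed_le_of_tendsto hlim hB)
  exact (hc μ hinv hμK).not_ge ((ENNReal.ofReal_le_iff_le_toReal (measure_ne_top _ _)).1 hcμ)

end EmpiricalMeasure

section Shift

variable {α : Type} {X : Set (ℕ → α)}

theorem iterate_shift_apply (x : ℕ → α) (i j : ℕ) : shift^[i] x j = x (j + i) := by
  induction i generalizing j with
  | zero => rfl
  | succ i ih =>
    rw [Function.iterate_succ_apply', shift, ih, Nat.add_right_comm, Nat.add_assoc]

variable [TopologicalSpace α]

theorem continuous_shift : Continuous (shift : (ℕ → α) → ℕ → α) :=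
  continuous_pi fun n => continuous_apply (n + 1)

theorem ShiftSpace.mapsTo_shift (hX : ShiftSpace X) : Set.MapsTo shift X X := hX.2.2

variable [Finite α] [DiscreteTopology α] [MeasurableSpace α] [MeasurableSingletonClass α]

theorem ShiftSpace.nonempty_Msigma (hX : ShiftSpace X) : (Msigma X).Nonempty := by
  obtain ⟨x, hx⟩ := hX.1
  obtain ⟨μ, hinv, hμX, -⟩ :=
    exists_tendsto_empiricalMeasure continuous_shift hX.2.1 hX.mapsTo_shift hx (le_refl atTop)
  exact ⟨μ, hinv, hμX⟩

end Shift

section Mismatches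

variable {α : Type} [DecidableEq α] {x x' y y' : ℕ → α} {c d : ℝ}

/-- The number of disagreements of two sequences among their first `n` symbols, that is, `n` times
their Hamming distance on `[0, n)`. -/
def mismatches (x y : ℕ → α) (n : ℕ) : ℕ := Nat.count (fun j => x j ≠ y j) n

theorem mismatches_le (x y : ℕ → α) (n : ℕ) : mismatches x y n ≤ n := Nat.count_le _

theorem mismatches_mono (x y : ℕ → α) : Monotone (mismatches x y) := Nat.count_monotone _

theorem mismatches_comm (x y : ℕ → α) (n : ℕ) : mismatches x y n = mismatches y x n := by
  simp only [mismatches, ne_comm]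

theorem mismatches_triangle (x y z : ℕ → α) (n : ℕ) :
    mismatches x z n ≤ mismatches x y n + mismatches y z n := by
  simp only [mismatches, Nat.count_eq_card_filter_range]
  refine (Finset.card_le_card fun j hj => ?_).trans (Finset.card_union_le _ _)
  simp only [Finset.mem_union, Finset.mem_filter] at hj ⊢
  by_cases h : x j = y j
  · exact Or.inr ⟨hj.1, h ▸ hj.2⟩
  · exact Or.inl ⟨hj.1, h⟩

theorem mismatches_congr {n : ℕ} (hx : ∀ j < n, x j = x' j) (hy : ∀ j < n, y j = y' j) :
    mismatches x y n = mismatches x' y' n := by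
  simp only [mismatches, Nat.count_eq_card_filter_range]
  refine congrArg Finset.card (Finset.filter_congr fun j hj => ?_)
  rw [hx j (Finset.mem_range.1 hj), hy j (Finset.mem_range.1 hj)]

theorem mismatches_add (x y : ℕ → α) (m n : ℕ) :
    mismatches x y (m + n) = mismatches x y m + mismatches (shift^[m] x) (shift^[m] y) n := by
  simp only [mismatches, Nat.count_add, iterate_shift_apply, Nat.add_comm]

theorem mismatches_eq_sum_indicator (n : ℕ) (p : (ℕ → α) × (ℕ → α)) :
    (mismatches p.1 p.2 n : ℝ) =
      ∑ k ∈ Finset.range n, {p : (ℕ → α) × (ℕ → α) | p.1 k ≠ p.2 k}.indicator 1 p := by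
  simp [mismatches, Nat.count_eq_card_filter_range, Set.indicator_apply, Finset.sum_ite]

theorem dbar_eq_limsup (x y : ℕ → α) :
    dbar x y = limsup (fun n : ℕ => (mismatches x y n : ℝ) / n) atTop := by
  simp only [dbar, mismatches, Nat.count_eq_card_filter_range]

theorem dbar_comm (x y : ℕ → α) : dbar x y = dbar y x := by
  simp only [dbar_eq_limsup, mismatches_comm x y]

theorem isBoundedUnder_mismatches_div (x y : ℕ → α) :
    IsBoundedUnder (· ≤ ·) atTop fun n : ℕ => (mismatches x y n : ℝ) / n :=
  isBoundedUnder_of ⟨1, fun n =>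
    div_le_one_of_le₀ (Nat.cast_le.2 (mismatches_le x y n)) n.cast_nonneg⟩

theorem dbar_nonneg (x y : ℕ → α) : 0 ≤ dbar x y := by
  rw [dbar_eq_limsup]
  exact le_limsup_of_frequently_le (Frequently.of_forall fun n => by positivity)
    (isBoundedUnder_mismatches_div x y)

theorem dbar_le_of_eventually (h : ∀ᶠ n : ℕ in atTop, (mismatches x y n : ℝ) ≤ c * n + d) :
    dbar x y ≤ c := by
  have hlim : Tendsto (fun n : ℕ => c + d / (n : ℝ)) atTop (𝓝 c) := by
    simpa using (tendsto_const_div_atTop_nhds_zero_nat d).const_add c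
  have hbelow : IsBoundedUnder (· ≥ ·) atTop fun n : ℕ => (mismatches x y n : ℝ) / n :=
    isBoundedUnder_of ⟨0, fun n => by positivity⟩
  rw [dbar_eq_limsup, ← hlim.limsup_eq]
  refine limsup_le_limsup ?_ hbelow.isCoboundedUnder_flip hlim.isBoundedUnder_le
  filter_upwards [h, eventually_gt_atTop 0] with n hn hpos
  have hpos : (0 : ℝ) < n := Nat.cast_pos.2 hpos
  rwa [div_le_iff₀ hpos, add_mul, div_mul_cancel₀ _ hpos.ne']

theorem dbar_le_one (x y : ℕ → α) : dbar x y ≤ 1 :=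
  dbar_le_of_eventually (d := 0) <| Eventually.of_forall fun n => by
    simpa using mismatches_le x y n

theorem eventually_mismatches_le_of_dbar_lt (h : dbar x y < c) :
    ∀ᶠ n : ℕ in atTop, (mismatches x y n : ℝ) ≤ c * n := by
  rw [dbar_eq_limsup] at h
  filter_upwards [eventually_lt_of_limsup_lt h (isBoundedUnder_mismatches_div x y),
    eventually_gt_atTop 0] with n hn hpos
  exact ((div_lt_iff₀ (Nat.cast_pos.2 hpos)).1 hn).le

/-- The points whose first `N` symbols disagree with those of every point of `Y` in proportion at
least `ε`. -/
def farFrom (Y : Set (ℕ → α)) (N : ℕ) (ε : ℝ) : Set (ℕ → α) :=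
  {x | ∀ y ∈ Y, ε * N ≤ mismatches x y N}

variable [TopologicalSpace α] [DiscreteTopology α]

theorem continuous_mismatches_left (y : ℕ → α) (n : ℕ) :
    Continuous fun x => mismatches x y n := by
  simp only [mismatches, Nat.count_eq_card_filter_range, Finset.card_filter]
  exact continuous_finsetSum _ fun j _ =>
    (continuous_of_discreteTopology (f := fun a : α => if a ≠ y j then 1 else 0)).comp
      (continuous_apply j)

theorem isClosed_farFrom (Y : Set (ℕ → α)) (N : ℕ) (ε : ℝ) : IsClosed (farFrom Y N ε) := by
  simp only [farFrom, Set.ofPred_forall]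
  exact isClosed_iInter fun y => isClosed_iInter fun _ =>
    isClosed_le continuous_const
      (continuous_of_discreteTopology.comp (continuous_mismatches_left y N))

end Mismatches

section Joining

variable {α : Type} [MeasurableSpace α] {μ ν : ProbabilityMeasure (ℕ → α)}
  {ξ : Measure ((ℕ → α) × (ℕ → α))}

theorem measurable_shift : Measurable (shift : (ℕ → α) → ℕ → α) :=
  measurable_pi_lambda _ fun n => measurable_pi_apply (n + 1)

theorem IsJoining.isProbabilityMeasure (h : IsJoining ξ μ ν) : IsProbabilityMeasure ξ := by
  have : IsProbabilityMeasure (ξ.map Prod.fst) := h.2.1 ▸ inferInstance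
  exact Measure.isProbabilityMeasure_of_map Prod.fst

theorem isJoining_prod (hμ : invariantPM μ) (hν : invariantPM ν) :
    IsJoining ((μ : Measure (ℕ → α)).prod (ν : Measure (ℕ → α))) μ ν := by
  refine ⟨?_, by simp, by simp⟩
  rw [← Measure.map_prod_map _ _ measurable_shift measurable_shift, hμ, hν]

theorem IsJoining.map_swap (h : IsJoining ξ μ ν) : IsJoining (ξ.map Prod.swap) ν μ := by
  have hs : Measurable (Prod.map shift shift : (ℕ → α) × (ℕ → α) → _) :=
    measurable_shift.prodMap measurable_shift
  refine ⟨?_, ?_, ?_⟩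
  · rw [Measure.map_map hs measurable_swap]
    conv_rhs => rw [← h.1, Measure.map_map measurable_swap hs]
    rfl
  · rw [Measure.map_map measurable_fst measurable_swap]
    exact h.2.2
  · rw [Measure.map_map measurable_snd measurable_swap]
    exact h.2.1

theorem IsJoining.ae_snd_mem (h : IsJoining ξ μ ν) {Y : Set (ℕ → α)} (hY : MeasurableSet Y)
    (hνY : ν Y = 1) : ∀ᵐ p ∂ξ, p.2 ∈ Y := by
  have hae : ∀ᵐ y ∂(ν : Measure (ℕ → α)), y ∈ Y := by
    change Y ∈ ae (ν : Measure (ℕ → α))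
    rw [mem_ae_iff_prob_eq_one hY, ← ProbabilityMeasure.ennreal_coeFn_eq_coeFn_toMeasure, hνY,
      ENNReal.coe_one]
  rw [← h.2.2] at hae
  exact ae_of_ae_map measurable_snd.aemeasurable hae

theorem IsJoining.dbarM_le (h : IsJoining ξ μ ν) : dbarM μ ν ≤ ξ.real {p | p.1 0 ≠ p.2 0} :=
  csInf_le ⟨0, fun _ ⟨_, _, hr⟩ => hr ▸ ENNReal.toReal_nonneg⟩ ⟨ξ, h, rfl⟩

theorem exists_isJoining_lt (hμ : invariantPM μ) (hν : invariantPM ν) {c : ℝ}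
    (h : dbarM μ ν < c) : ∃ ξ, IsJoining ξ μ ν ∧ ξ.real {p | p.1 0 ≠ p.2 0} < c := by
  have hne : {r : ℝ | ∃ ξ, IsJoining ξ μ ν ∧ r = (ξ {p | p.1 0 ≠ p.2 0}).toReal}.Nonempty :=
    ⟨_, _, isJoining_prod hμ hν, rfl⟩
  obtain ⟨_, ⟨ξ, hξ, rfl⟩, hlt⟩ := exists_lt_of_csInf_lt hne h
  exact ⟨ξ, hξ, hlt⟩

theorem dbarM_nonneg (μ ν : ProbabilityMeasure (ℕ → α)) : 0 ≤ dbarM μ ν :=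
  Real.sInf_nonneg fun _ ⟨_, _, hr⟩ => hr ▸ ENNReal.toReal_nonneg

theorem dbarM_le_one (μ ν : ProbabilityMeasure (ℕ → α)) : dbarM μ ν ≤ 1 := by
  by_cases h : ∃ ξ, IsJoining ξ μ ν
  · obtain ⟨ξ, hξ⟩ := h
    have := hξ.isProbabilityMeasure
    exact hξ.dbarM_le.trans measureReal_le_one
  · have hempty : {r : ℝ | ∃ ξ, IsJoining ξ μ ν ∧ r = (ξ {p | p.1 0 ≠ p.2 0}).toReal} = ∅ :=
      Set.eq_empty_of_forall_notMem fun _ ⟨ξ, hξ, _⟩ => h ⟨ξ, hξ⟩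
    rw [dbarM, hempty, Real.sInf_empty]
    exact zero_le_one

variable [Countable α] [MeasurableSingletonClass α]

theorem measurableSet_coord_ne (k : ℕ) :
    MeasurableSet {p : (ℕ → α) × (ℕ → α) | p.1 k ≠ p.2 k} :=
  (measurableSet_eq_fun ((measurable_pi_apply k).comp measurable_fst)
    ((measurable_pi_apply k).comp measurable_snd)).compl

theorem dbarM_comm (μ ν : ProbabilityMeasure (ℕ → α)) : dbarM μ ν = dbarM ν μ := by
  have hswap : ∀ {μ ν : ProbabilityMeasure (ℕ → α)} {r : ℝ},
      (∃ ξ, IsJoining ξ μ ν ∧ r = (ξ {p | p.1 0 ≠ p.2 0}).toReal) →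
        ∃ ξ, IsJoining ξ ν μ ∧ r = (ξ {p | p.1 0 ≠ p.2 0}).toReal := by
    rintro μ ν r ⟨ξ, hξ, rfl⟩
    refine ⟨_, hξ.map_swap, ?_⟩
    rw [Measure.map_apply measurable_swap (measurableSet_coord_ne 0)]
    simp only [Set.preimage_ofPred_eq, Prod.fst_swap, Prod.snd_swap, ne_comm]
  exact congrArg sInf (Set.ext fun r => ⟨hswap, hswap⟩)

theorem IsJoining.measureReal_coord_ne (h : IsJoining ξ μ ν) (k : ℕ) :
    ξ.real {p | p.1 k ≠ p.2 k} = ξ.real {p | p.1 0 ≠ p.2 0} := by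
  induction k with
  | zero => rfl
  | succ k ih =>
    rw [← ih]
    conv_rhs => rw [← h.1, map_measureReal_apply (measurable_shift.prodMap measurable_shift)
      (measurableSet_coord_ne k)]
    rfl

theorem integrable_indicator_coord_ne [IsFiniteMeasure ξ] (k : ℕ) :
    Integrable ({p | p.1 k ≠ p.2 k}.indicator (1 : (ℕ → α) × (ℕ → α) → ℝ)) ξ :=
  (integrable_const 1).indicator (measurableSet_coord_ne k)

variable [DecidableEq α]

theorem integrable_mismatches [IsFiniteMeasure ξ] (n : ℕ) :
    Integrable (fun p => (mismatches p.1 p.2 n : ℝ)) ξ := by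
  simp only [mismatches_eq_sum_indicator]
  exact integrable_finsetSum _ fun k _ => integrable_indicator_coord_ne k

theorem IsJoining.integral_mismatches (h : IsJoining ξ μ ν) (n : ℕ) :
    ∫ p, (mismatches p.1 p.2 n : ℝ) ∂ξ = n * ξ.real {p | p.1 0 ≠ p.2 0} := by
  have := h.isProbabilityMeasure
  simp only [mismatches_eq_sum_indicator]
  rw [integral_finsetSum _ fun k _ => integrable_indicator_coord_ne k]
  simp only [integral_indicator_one (measurableSet_coord_ne _), h.measureReal_coord_ne,
    Finset.sum_const, Finset.card_range, nsmul_eq_mul]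

variable [TopologicalSpace α] [DiscreteTopology α]

theorem IsJoining.mul_measureReal_farFrom_le (h : IsJoining ξ μ ν) {Y : Set (ℕ → α)}
    (hY : MeasurableSet Y) (hνY : ν Y = 1) {n : ℕ} (hn : 0 < n) {ε : ℝ} (hε : 0 ≤ ε) :
    ε * (μ : Measure (ℕ → α)).real (farFrom Y n ε) ≤ ξ.real {p | p.1 0 ≠ p.2 0} := by
  have := h.isProbabilityMeasure
  have hle : (μ : Measure (ℕ → α)).real (farFrom Y n ε) ≤
      ξ.real {p | ε * n ≤ mismatches p.1 p.2 n} := by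
    rw [← h.2.1, map_measureReal_apply measurable_fst (isClosed_farFrom Y n ε).measurableSet]
    refine ENNReal.toReal_mono (measure_ne_top _ _) (measure_mono_ae ?_)
    filter_upwards [h.ae_snd_mem hY hνY] with p hp hfar using hfar _ hp
  have hmarkov := mul_meas_ge_le_integral_of_nonneg
    (Eventually.of_forall fun p => Nat.cast_nonneg _) (integrable_mismatches (ξ := ξ) n) (ε * n)
  rw [h.integral_mismatches] at hmarkov
  refine le_of_mul_le_mul_left ?_ (Nat.cast_pos.2 hn : (0 : ℝ) < n)
  calc (n : ℝ) * (ε * (μ : Measure (ℕ → α)).real (farFrom Y n ε))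
      = ε * n * (μ : Measure (ℕ → α)).real (farFrom Y n ε) := by ring
    _ ≤ ε * n * ξ.real {p | ε * n ≤ mismatches p.1 p.2 n} := by gcongr
    _ ≤ n * ξ.real {p | p.1 0 ≠ p.2 0} := hmarkov

theorem measureReal_farFrom_lt {Y : Set (ℕ → α)} (hY : MeasurableSet Y) {n : ℕ} (hn : 0 < n)
    {ε : ℝ} (hε : 0 < ε) (hμ : invariantPM μ) (hν : ν ∈ Msigma Y) (h : dbarM μ ν < ε ^ 2) :
    (μ : Measure (ℕ → α)).real (farFrom Y n ε) < ε := by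
  obtain ⟨ξ, hξ, hξlt⟩ := exists_isJoining_lt hμ hν.1 h
  have hle := hξ.mul_measureReal_farFrom_le hY hν.2 hn hε.le
  exact lt_of_mul_lt_mul_left ((hle.trans_lt hξlt).trans_eq (sq ε)) hε.le

end Joining

section Concatenation

variable {α : Type}

theorem ofFn_mem_lang {Y : Set (ℕ → α)} {y : ℕ → α} (hy : y ∈ Y) (n : ℕ) :
    (List.ofFn fun k : Fin n => y k) ∈ lang Y :=
  ⟨y, hy, 0, List.ext_getElem (by simp) fun i _ _ => by simp⟩

theorem length_flatten_map_range (w : ℕ → List α) (j : ℕ) :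
    ((List.range j).map w).flatten.length = ∑ i ∈ Finset.range j, (w i).length := by
  induction j with
  | zero => rfl
  | succ j ih => simp [List.range_succ, Finset.sum_range_succ, ih]

variable [Inhabited α]

theorem concatSeq_eq_getD (w : ℕ → List α) (n : ℕ) :
    concatSeq w n = ((List.range (n + 1)).map w).flatten.getD n default := by
  have hwords : (List.ofFn fun i : Fin (n + 1) => w i) = (List.range (n + 1)).map w :=
    List.ext_getElem (by simp) fun i _ _ => by rw [List.getElem_ofFn]; simp
  rw [concatSeq, hwords]

theorem concatSeq_sum_length_add {w : ℕ → List α} (hw : ∀ j, w j ≠ []) {j k : ℕ}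
    (hk : k < (w j).length) :
    concatSeq w (∑ i ∈ Finset.range j, (w i).length + k) = (w j)[k] := by
  set n := ∑ i ∈ Finset.range j, (w i).length + k with hn
  have hj : j ≤ n := by
    have := Finset.card_nsmul_le_sum (Finset.range j) (fun i => (w i).length) 1 fun i _ =>
      List.length_pos_iff.2 (hw i)
    simp only [Finset.card_range, smul_eq_mul, mul_one] at this
    omega
  obtain ⟨r, hr⟩ := Nat.exists_eq_add_of_le hj
  have hsplit : (List.range (n + 1)).map w = (List.range j).map w ++
      w j :: (List.range r).map fun i => w (j + 1 + i) := by
    rw [hr, Nat.add_assoc, List.range_add, List.range_succ_eq_map]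
    simp [Function.comp_def, Nat.add_assoc, Nat.add_comm 1]
  rw [concatSeq_eq_getD, hsplit, List.flatten_append, List.flatten_cons,
    List.getD_append_right _ _ _ _ (by rw [length_flatten_map_range]; omega),
    length_flatten_map_range, hn, Nat.add_sub_cancel_left, List.getD_append _ _ _ _ hk,
    List.getD_eq_getElem _ _ hk]

theorem iterate_shift_concatSeq_ofFn {p : ℕ → ℕ} (hp : StrictMono p) (h0 : p 0 = 0)
    (y : ℕ → ℕ → α) {j k : ℕ} (hk : k < p (j + 1) - p j) :
    shift^[p j] (concatSeq fun i => List.ofFn fun k : Fin (p (i + 1) - p i) => y i k) k =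
      y j k := by
  set w : ℕ → List α := fun i => List.ofFn fun k : Fin (p (i + 1) - p i) => y i k
  have hlen : ∀ i, (w i).length = p (i + 1) - p i := fun i => List.length_ofFn
  have hw : ∀ i, w i ≠ [] := fun i => by
    rw [← List.length_pos_iff, hlen]
    exact Nat.sub_pos_of_lt (hp i.lt_succ_self)
  have hsum : p j = ∑ i ∈ Finset.range j, (w i).length := by
    simp only [hlen]
    rw [Finset.sum_range_tsub hp.monotone, h0, Nat.sub_zero]
  rw [iterate_shift_apply, Nat.add_comm, hsum,
    concatSeq_sum_length_add hw (by rwa [hlen] : k < (w j).length), List.getElem_ofFn]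

end Concatenation

section CutSequence

/-- A sequence of cut times for blocks of length at least `N`: starting at `0`, the next cut is the
first time in the set `G` of good times at distance at least `N` from the current one. -/
structure IsCutSequence (G : ℕ → Prop) (N : ℕ) (p : ℕ → ℕ) : Prop where
  zero : p 0 = 0
  add_le (j : ℕ) : p j + N ≤ p (j + 1)
  good (j : ℕ) : G (p (j + 1))
  not_good {i j : ℕ} : p j + N ≤ i → i < p (j + 1) → ¬G i

variable {G : ℕ → Prop} {N : ℕ} {p : ℕ → ℕ}

open Classical in
theorem exists_isCutSequence (hG : ∃ᶠ i in atTop, G i) (N : ℕ) : ∃ p, IsCutSequence G N p := by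
  have hnext : ∀ m, ∃ i, m + N ≤ i ∧ G i := fun m => frequently_atTop.1 hG (m + N)
  let next : ℕ → ℕ := fun m => Nat.find (hnext m)
  have hsucc : ∀ j, next^[j + 1] 0 = next (next^[j] 0) := fun j =>
    Function.iterate_succ_apply' next j 0
  refine ⟨fun j => next^[j] 0, rfl, fun j => ?_, fun j => ?_, fun {i j} hle hlt hi => ?_⟩
  · exact (hsucc j).symm ▸ (Nat.find_spec (hnext _)).1
  · exact (hsucc j).symm ▸ (Nat.find_spec (hnext _)).2
  · exact Nat.find_min (hnext _) (hlt.trans_eq (hsucc j)) ⟨hle, hi⟩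

theorem IsCutSequence.strictMono (h : IsCutSequence G N p) (hN : 0 < N) : StrictMono p :=
  strictMono_nat_of_lt_succ fun j => (Nat.lt_add_of_pos_right hN).trans_le (h.add_le j)

theorem count_add_count_le {P Q : ℕ → Prop} [DecidablePred P] [DecidablePred Q] {a b : ℕ}
    (hab : a ≤ b) (h : ∀ i, a ≤ i → i < b → P i → Q i) :
    Nat.count P b + Nat.count Q a ≤ Nat.count P a + Nat.count Q b := by
  obtain ⟨k, rfl⟩ := Nat.exists_eq_add_of_le hab
  have hle : Nat.count (fun i => P (a + i)) k ≤ Nat.count (fun i => Q (a + i)) k := by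
    simp only [Nat.count_eq_card_filter_range]
    refine Finset.card_le_card fun i hi => ?_
    simp only [Finset.mem_filter, Finset.mem_range] at hi ⊢
    exact ⟨hi.1, h _ (Nat.le_add_right a i) (Nat.add_lt_add_left hi.1 a) hi.2⟩
  rw [Nat.count_add, Nat.count_add]
  omega

theorem frequently_not_of_eventually_count_lt {P : ℕ → Prop} [DecidablePred P] {c : ℝ}
    (hc : c < 1) (h : ∀ᶠ n : ℕ in atTop, (Nat.count P n : ℝ) < c * n) :
    ∃ᶠ n in atTop, ¬P n := by
  intro hP
  simp only [not_not] at hP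
  obtain ⟨m, hm⟩ := eventually_atTop.1 hP
  have hlarge : ∀ᶠ n : ℕ in atTop, (m : ℝ) / (1 - c) ≤ n :=
    tendsto_natCast_atTop_atTop.eventually_ge_atTop _
  obtain ⟨n, hlt, hn, hmn⟩ := (h.and (hlarge.and (eventually_ge_atTop m))).exists
  have hcount : n ≤ Nat.count P n + m := by
    have := count_add_count_le (P := fun _ => True) hmn fun i hi _ _ => hm i hi
    simp only [Nat.count_true] at this
    omega
  rw [div_le_iff₀ (by linarith)] at hn
  have : (n : ℝ) ≤ Nat.count P n + m := by exact_mod_cast hcount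
  linarith

variable {α : Type} [DecidableEq α] [DecidablePred G] {x z : ℕ → α}

theorem IsCutSequence.mismatches_add_count_le (h : IsCutSequence G N p) (x z : ℕ → α) {j n : ℕ}
    (hjn : p j ≤ n) (hnj : n ≤ p (j + 1)) :
    mismatches x z n + Nat.count (fun i => ¬G i) (p j) ≤
      mismatches x z (p j) + mismatches (shift^[p j] x) (shift^[p j] z) N +
        Nat.count (fun i => ¬G i) n := by
  have hbad : Monotone (Nat.count fun i => ¬G i) := Nat.count_monotone _
  rw [← mismatches_add]
  rcases le_total n (p j + N) with hn | hn
  · exact add_le_add (mismatches_mono x z hn) (hbad hjn)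
  · have hcount := count_add_count_le (P := fun i => x i ≠ z i) hn fun i hi hin _ =>
      h.not_good hi (hin.trans_le hnj)
    exact (Nat.add_le_add_left (hbad (Nat.le_add_right _ N)) _).trans hcount

theorem IsCutSequence.mismatches_cut_le_count_add (h : IsCutSequence G N p) {ε : ℝ} (hε : 0 ≤ ε)
    (hmatch : ∀ j, (mismatches (shift^[p (j + 1)] x) (shift^[p (j + 1)] z) N : ℝ) ≤ ε * N)
    (j : ℕ) : (mismatches x z (p (j + 1)) : ℝ) ≤
      Nat.count (fun i => ¬G i) (p (j + 1)) + ε * p (j + 1) + p 1 := by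
  induction j with
  | zero =>
    have hle : (mismatches x z (p 1) : ℝ) ≤ p 1 := Nat.cast_le.2 (mismatches_le x z _)
    exact hle.trans (le_add_of_nonneg_left (by positivity))
  | succ j ih =>
    have hcut := h.add_le (j + 1)
    have hstep := h.mismatches_add_count_le x z ((Nat.le_add_right _ N).trans hcut) le_rfl
    have hεcut : ε * (p (j + 1) + N) ≤ ε * p (j + 2) :=
      mul_le_mul_of_nonneg_left (by exact_mod_cast hcut) hε
    rify at hstep
    linarith [hmatch j]

theorem IsCutSequence.mismatches_le_count_add (h : IsCutSequence G N p) (hN : 0 < N) {ε : ℝ}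
    (hε : 0 ≤ ε)
    (hmatch : ∀ j, (mismatches (shift^[p (j + 1)] x) (shift^[p (j + 1)] z) N : ℝ) ≤ ε * N) (n : ℕ) :
    (mismatches x z n : ℝ) ≤ Nat.count (fun i => ¬G i) n + ε * n + (p 1 + N) := by
  rcases le_or_gt n (p 1) with hn | hn
  · have hle : (mismatches x z n : ℝ) ≤ p 1 := Nat.cast_le.2 ((mismatches_le x z n).trans hn)
    have hnonneg : 0 ≤ Nat.count (fun i => ¬G i) n + ε * n + N := by positivity
    linarith
  · have hp : StrictMono fun j => p (j + 1) := (h.strictMono hN).comp (strictMono_id.add_const 1)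
    obtain ⟨j, hjn, hnj⟩ := hp.exists_between_of_tendsto_atTop hp.tendsto_atTop hn
    have hstep := (h.mismatches_add_count_le x z hjn.le hnj).trans
      (Nat.add_le_add_right (Nat.add_le_add_left (mismatches_le _ _ N) _) _)
    have hεn : ε * p (j + 1) ≤ ε * n := mul_le_mul_of_nonneg_left (Nat.cast_le.2 hjn.le) hε
    rify at hstep
    linarith [h.mismatches_cut_le_count_add hε hmatch j]

end CutSequence

section Pursuit

variable {α : Type} [DecidableEq α] {X Y : Set (ℕ → α)} {x : ℕ → α} {N : ℕ} {ε : ℝ}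

theorem exists_mismatches_lt_of_notMem_farFrom (h : x ∉ farFrom Y N ε) :
    ∃ y ∈ Y, (mismatches x y N : ℝ) < ε * N := by
  simpa [farFrom] using h

variable [Inhabited α]

open Classical in
theorem exists_concatSeq_mismatches_le (hY : Y.Nonempty) (hN : 0 < N) (hε : 0 ≤ ε)
    (hx : ∃ᶠ i in atTop, shift^[i] x ∉ farFrom Y N ε) :
    ∃ w : ℕ → List α, (∀ j, w j ∈ lang Y) ∧ (∀ j, N ≤ (w j).length) ∧ ∃ d : ℝ, ∀ n : ℕ,
      (mismatches x (concatSeq w) n : ℝ) ≤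
        Nat.count (fun i => shift^[i] x ∈ farFrom Y N ε) n + ε * n + d := by
  obtain ⟨p, hp⟩ := exists_isCutSequence hx N
  have hword : ∀ i, ∃ y ∈ Y, shift^[i] x ∉ farFrom Y N ε →
      (mismatches (shift^[i] x) y N : ℝ) ≤ ε * N := fun i => by
    by_cases h : shift^[i] x ∈ farFrom Y N ε
    · exact hY.imp fun y hy => ⟨hy, fun hnot => absurd h hnot⟩
    · obtain ⟨y, hy, hlt⟩ := exists_mismatches_lt_of_notMem_farFrom h
      exact ⟨y, hy, fun _ => hlt.le⟩
  choose y hyY hmatch using hword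
  have hlen : ∀ j, N ≤ p (j + 1) - p j := fun j => Nat.le_sub_of_add_le' (hp.add_le j)
  let w : ℕ → List α := fun j => List.ofFn fun k : Fin (p (j + 1) - p j) => y (p j) k
  refine ⟨w, fun j => ofFn_mem_lang (hyY _) _, fun j => (hlen j).trans_eq List.length_ofFn.symm,
    p 1 + N, fun n => ?_⟩
  suffices h : ∀ j, (mismatches (shift^[p (j + 1)] x) (shift^[p (j + 1)] (concatSeq w)) N : ℝ) ≤
      ε * N by
    simpa only [not_not] using hp.mismatches_le_count_add hN hε h n
  intro j
  rw [mismatches_congr (fun _ _ => rfl) fun k hk => iterate_shift_concatSeq_ofFn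
    (hp.strictMono hN) hp.zero (fun j => y (p j)) (hk.trans_le (hlen (j + 1)))]
  exact hmatch _ (hp.good j)

variable [TopologicalSpace α] [DiscreteTopology α] [Finite α] [MeasurableSpace α]
  [MeasurableSingletonClass α]

theorem exists_dbar_le (hX : ShiftSpace X) (hY : ShiftSpace Y) (hsh : DbarShadowing Y)
    (hε : 0 < ε) (h : ∀ μ ∈ Msigma X, ∃ ν ∈ Msigma Y, dbarM μ ν < ε ^ 2) {c : ℝ}
    (hc : 2 * ε < c) (hx : x ∈ X) : ∃ y ∈ Y, dbar x y ≤ c := by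
  classical
  rcases le_or_gt 1 ε with hε1 | hε1
  · exact hY.1.imp fun y hy => ⟨hy, (dbar_le_one x y).trans (by linarith)⟩
  obtain ⟨N, hN, hshadow⟩ := hsh (c - 2 * ε) (sub_pos.2 hc)
  have hvisits := eventually_count_visits_lt continuous_shift hX.2.1 hX.mapsTo_shift hx
    (isClosed_farFrom Y N ε) fun μ hμ hμX => by
      obtain ⟨ν, hν, hlt⟩ := h μ ⟨hμ, hμX⟩
      exact measureReal_farFrom_lt hY.2.1.measurableSet hN hε hμ hν hlt
  obtain ⟨w, hwY, hwN, d, hw⟩ := exists_concatSeq_mismatches_le hY.1 hN hε.le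
    (frequently_not_of_eventually_count_lt hε1 hvisits)
  obtain ⟨y, hy, hlt⟩ := hshadow w hwY hwN
  refine ⟨y, hy, dbar_le_of_eventually (d := d) ?_⟩
  filter_upwards [hvisits, eventually_mismatches_le_of_dbar_lt hlt] with n hn hyn
  have htri : (mismatches x y n : ℝ) ≤
      mismatches x (concatSeq w) n + mismatches (concatSeq w) y n :=
    mod_cast mismatches_triangle x (concatSeq w) y n
  linarith [hw n]

end Pursuit

theorem statement8_general {α : Type} [DecidableEq α] [Inhabited α] [TopologicalSpace α]
    [DiscreteTopology α] [Finite α] [MeasurableSpace α] [MeasurableSingletonClass α]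
    {X Y : Set (ℕ → α)} (hX : ShiftSpace X) (hY : ShiftSpace Y) (hshX : DbarShadowing X)
    (hshY : DbarShadowing Y) :
    hausdist dbar X Y ≤ 2 * √(hausdist dbarM (Msigma X) (Msigma Y)) := by
  refine le_of_forall_gt_imp_ge_of_dense fun c hc => ?_
  obtain ⟨ε, hHε, hεc⟩ := exists_between ((lt_div_iff₀' two_pos).2 hc)
  have hε : 0 < ε := (Real.sqrt_nonneg _).trans_lt hHε
  have hH : hausdist dbarM (Msigma X) (Msigma Y) < ε ^ 2 := Real.lt_sq_of_sqrt_lt hHε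
  have hc : 2 * ε < c := (lt_div_iff₀' two_pos).1 hεc
  have hXY := exists_lt_of_hausdist_lt dbarM_nonneg dbarM_le_one hY.nonempty_Msigma hH
  rw [hausdist_comm dbarM_comm] at hH
  have hYX := exists_lt_of_hausdist_lt dbarM_nonneg dbarM_le_one hX.nonempty_Msigma hH
  refine hausdist_le dbar_nonneg hX.1 hY.1
    (fun x hx => exists_dbar_le hX hY hshY hε hXY hc hx) fun y hy => ?_
  obtain ⟨x, hx, hle⟩ := exists_dbar_le hY hX hshX hε hYX hc hy
  exact ⟨x, hx, dbar_comm x y ▸ hle⟩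

/-- for shift spaces with `d̄`-shadowing, `d̄_M^H(M_σ(X), M_σ(Y)) < ε²`
implies `d̄^H(X, Y) < 7ε`. -/
theorem statement8 (hA : 2 ≤ Fintype.card A) (X Y : Set (ℕ → A))
    (hX : ShiftSpace X) (hY : ShiftSpace Y)
    (hshX : DbarShadowing X) (hshY : DbarShadowing Y)
    (eps : ℝ) (heps : 0 < eps)
    (h : hausdist dbarM (Msigma X) (Msigma Y) < eps ^ 2) :
    hausdist dbar X Y < 7 * eps := by
  have hsqrt : √(hausdist dbarM (Msigma X) (Msigma Y)) < eps := (Real.sqrt_lt' heps).2 h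
  linarith [statement8_general hX hY hshX hshY]

end DbarPaper
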